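/- Let X_1, …, X_k, with k ≥ 2 a power of 2, be nonnegative continuous MHR random variables with finite expectations; run Algorithm 1 on them, obtaining second output β₂ and surviving index i*. Then for every ε ∈ (0, 1/16): Con[X_{i*} ≥ log₂(1/ε) · β₂] ≤ 6 · √ε · log₂(1/ε) · β₂. -/

import Mathlib

open MeasureTheory ProbabilityTheory

/-- The top `1/p`-quantile of the random variable `X` under `μ`:
`α_p(X) = sup {τ : Pr[X > τ] ≥ 1/p}`. -/
noncomputable def alphaQ {Ω : Type*} [MeasurableSpace Ω] (μ : Measure Ω) (X : Ω → ℝ) (p : ℝ) : ℝ :=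
  sSup {τ : ℝ | ENNReal.ofReal (1 / p) ≤ μ {ω | τ < X ω}}

/-- The largest of the (nonnegative) values `v i`, `i ∈ s`. -/
noncomputable def fmax {ι : Type*} (s : Finset ι) (v : ι → ℝ) : ℝ :=
  s.fold max 0 v

/-- The second largest of the (nonnegative) values `v i`, `i ∈ s` (for `s` of size ≥ 2). -/
noncomputable def fsmax {ι : Type*} [DecidableEq ι] (s : Finset ι) (v : ι → ℝ) : ℝ :=
  s.fold max 0 fun i => (s.erase i).fold max 0 fun j => min (v i) (v j)

/-- A run of Algorithm 1 on the `k = 2^K` random variables `X_0, …, X_{k-1}`: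
`Q 0` is the full index set; in round `t` (`0 ≤ t < K`) the surviving set `Q (t+1) ⊆ Q t` has
size `k/2^{t+1}` and consists of indices of `Q t` with the largest values of
`α_{√(k/2^t)}(X_i)`; `βt t` is the `(k/2^{t+1}+1)`-st largest such value, i.e. the largest
value of `α_{√(k/2^t)}(X_j)` over eliminated `j ∈ Q t \ Q (t+1)`.  `istar` is the unique
surviving index, and the outputs are `β₁ = max_{t < K} βt t` and `β₂ = α_{√2}(X_{istar})`. -/
def AlgoRun {Ω : Type*} [MeasurableSpace Ω] (μ : Measure Ω) (K : ℕ)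
    (X : Fin (2 ^ K) → Ω → ℝ) (Q : ℕ → Finset (Fin (2 ^ K))) (βt : ℕ → ℝ)
    (istar : Fin (2 ^ K)) (β₁ β₂ : ℝ) : Prop :=
  Q 0 = Finset.univ ∧
  (∀ t, t < K →
    Q (t + 1) ⊆ Q t ∧
    (Q (t + 1)).card = 2 ^ (K - (t + 1)) ∧
    (∀ i ∈ Q (t + 1), ∀ j ∈ Q t, j ∉ Q (t + 1) →
      alphaQ μ (X j) (Real.sqrt ((2 ^ K : ℝ) / 2 ^ t)) ≤
        alphaQ μ (X i) (Real.sqrt ((2 ^ K : ℝ) / 2 ^ t))) ∧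
    βt t = (Q t \ Q (t + 1)).fold max 0
      (fun j => alphaQ μ (X j) (Real.sqrt ((2 ^ K : ℝ) / 2 ^ t)))) ∧
  Q K = {istar} ∧
  β₁ = (Finset.range K).fold max 0 βt ∧
  β₂ = alphaQ μ (X istar) (Real.sqrt 2)

/-- `X` is a (nonnegative) continuous random variable with monotone hazard rate: it has a
density `f` (w.r.t. Lebesgue measure), and the hazard rate `f x / (1 - F x)` is non-decreasing
on `{x | F x < 1}`, where `F` is the CDF of `X`. -/
def IsMHR {Ω : Type*} [MeasurableSpace Ω] (μ : Measure Ω) (X : Ω → ℝ) : Prop :=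
  ∃ f : ℝ → ℝ, (∀ x, 0 ≤ f x) ∧
    Measure.map X μ = (volume : Measure ℝ).withDensity (fun x => ENNReal.ofReal (f x)) ∧
    ∀ x y : ℝ, x ≤ y → (μ {ω | X ω ≤ x}).toReal < 1 → (μ {ω | X ω ≤ y}).toReal < 1 →
      f x / (1 - (μ {ω | X ω ≤ x}).toReal) ≤ f y / (1 - (μ {ω | X ω ≤ y}).toReal)

/-- `Con[X ≥ x] = E[X · 1{X ≥ x}]`. -/
noncomputable def tailCon {Ω : Type*} [MeasurableSpace Ω] (μ : MeasureTheory.Measure Ω)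
    (X : Ω → ℝ) (x : ℝ) : ℝ :=
  ∫ ω in {ω | x ≤ X ω}, X ω ∂μ

/-!
An MHR variable is "new better than used": its survival function `G` satisfies
`G (a + t) ≤ G a * G t` for `a, t ≥ 0`. Indeed, as long as `G a * G u < G (a + u)`, the inequality
of the hazard rates at `u` and `a + u` gives `G a * f u ≤ f (a + u)`, so `G a * G u - G (a + u)` is
non-decreasing there and cannot have dropped below zero.

Let `G b ≤ 1 / p`. Submultiplicativity makes the tail geometric, `Pr[X ≥ L * b] ≤ p ^ (1 - L)`, and
after integration yields `E[(X - a)⁺] ≤ G a * E[X]`. The choice `a = b` bounds `E[X]` by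
`p / (p - 1) * b`, and the choice `a = L * b` bounds the contribution of the tail by
`p ^ (1 - L) * (L + p / (p - 1)) * b`. The theorem is the case `p = √2`, `L = log₂ (1 / ε)`.
-/

open Filter Set Topology

section Preliminaries

lemma nonneg_of_le_of_forall_Ioc_neg {φ : ℝ → ℝ} {a b : ℝ} (hab : a ≤ b)
    (hφ : ContinuousOn φ (Icc a b)) (ha : 0 ≤ φ a)
    (hle : ∀ s ∈ Icc a b, (∀ u ∈ Ioc s b, φ u < 0) → φ s ≤ φ b) : 0 ≤ φ b := by
  have hcompact : IsCompact (Icc a b ∩ φ ⁻¹' Ici 0) :=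
    isCompact_Icc.of_isClosed_subset (hφ.preimage_isClosed_of_isClosed isClosed_Icc isClosed_Ici)
      inter_subset_left
  obtain ⟨s, ⟨hs, hφs⟩, hmax⟩ := hcompact.exists_isGreatest ⟨a, left_mem_Icc.2 hab, ha⟩
  refine le_trans hφs (hle s hs fun u hu ↦ lt_of_not_ge fun hφu ↦ ?_)
  exact hu.1.not_ge (hmax ⟨⟨hs.1.trans hu.1.le, hu.2⟩, hφu⟩)

lemma continuous_cdf (ν : Measure ℝ) [IsProbabilityMeasure ν] [NullSingletonClass ν] :
    Continuous (cdf ν) := by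
  refine continuous_iff_continuousAt.2 fun x ↦ ?_
  rw [(monotone_cdf ν).continuousAt_iff_leftLim_eq_rightLim, StieltjesFunction.rightLim_eq]
  have hjump : ENNReal.ofReal (cdf ν x - Function.leftLim (cdf ν) x) = 0 := by
    rw [← StieltjesFunction.measure_singleton, measure_cdf, measure_singleton]
  exact ((monotone_cdf ν).leftLim_le le_rfl).antisymm
    (sub_nonpos.1 (ENNReal.ofReal_eq_zero.1 hjump))

lemma sqrt_two_rpow_one_sub_logb_inv {ε : ℝ} (hε : 0 < ε) :
    √2 ^ (1 - Real.logb 2 (1 / ε)) = √2 * √ε := by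
  have hpow : √2 ^ Real.logb 2 (1 / ε) = (√ε)⁻¹ := by
    rw [Real.sqrt_eq_rpow 2, ← Real.rpow_mul zero_le_two, mul_comm, Real.rpow_mul zero_le_two,
      Real.rpow_logb two_pos (by norm_num) (by positivity), ← Real.sqrt_eq_rpow, one_div,
      Real.sqrt_inv]
  rw [Real.rpow_sub (by positivity), Real.rpow_one, hpow, div_inv_eq_mul]

lemma four_le_logb_two_one_div {ε : ℝ} (hε : 0 < ε) (hε' : ε ≤ 1 / 16) :
    4 ≤ Real.logb 2 (1 / ε) := by
  rw [Real.le_logb_iff_rpow_le one_lt_two (by positivity), le_div_comm₀ (by positivity) hε]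
  norm_num [hε']

end Preliminaries

/-- The survival function `x ↦ Pr[X > x]` of the random variable `X`. -/
noncomputable def survival {Ω : Type*} [MeasurableSpace Ω] (μ : Measure Ω) (X : Ω → ℝ) (x : ℝ) :
    ℝ :=
  μ.real {ω | x < X ω}

/-- The class "new better than used" of reliability theory: given `X > a`, the residual life `X - a`
is stochastically dominated by `X`. The condition `Pr[X > a + t | X > a] ≤ Pr[X > t]` is stated
without the division by `Pr[X > a]`. -/
def IsNewBetterThanUsed {Ω : Type*} [MeasurableSpace Ω] (μ : Measure Ω) (X : Ω → ℝ) : Prop :=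
  ∀ a t : ℝ, 0 ≤ a → 0 ≤ t → survival μ X (a + t) ≤ survival μ X a * survival μ X t

section Survival

variable {Ω : Type*} [MeasurableSpace Ω] {μ : Measure Ω} {X : Ω → ℝ}

lemma survival_nonneg (x : ℝ) : 0 ≤ survival μ X x :=
  measureReal_nonneg

lemma ofReal_survival [IsFiniteMeasure μ] (x : ℝ) :
    ENNReal.ofReal (survival μ X x) = μ {ω | x < X ω} :=
  ofReal_measureReal

lemma antitone_survival [IsFiniteMeasure μ] : Antitone (survival μ X) :=
  fun _ _ hxy ↦ measureReal_mono fun _ hω ↦ hxy.trans_lt hω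

variable [IsProbabilityMeasure μ]

lemma survival_le_one (x : ℝ) : survival μ X x ≤ 1 :=
  measureReal_le_one

lemma survival_eq_one_of_ae_lt {x : ℝ} (h : ∀ᵐ ω ∂μ, x < X ω) : survival μ X x = 1 := by
  rw [survival, measureReal_congr (eventuallyEq_univ.2 h), probReal_univ]

lemma survival_eq_one_sub_measureReal_le (hX : AEMeasurable X μ) (x : ℝ) :
    survival μ X x = 1 - μ.real {ω | X ω ≤ x} := by
  rw [← probReal_compl_eq_one_sub₀ (nullMeasurableSet_le hX aemeasurable_const), survival]
  simp only [compl_ofPred, not_le]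

lemma survival_eq_one_sub_cdf (hX : AEMeasurable X μ) (x : ℝ) :
    survival μ X x = 1 - cdf (μ.map X) x := by
  have := Measure.isProbabilityMeasure_map hX
  rw [survival_eq_one_sub_measureReal_le hX, cdf_eq_real,
    map_measureReal_apply_of_aemeasurable hX measurableSet_Iic]
  rfl

lemma tendsto_survival_atTop (hX : AEMeasurable X μ) :
    Tendsto (survival μ X) atTop (𝓝 0) := by
  simpa only [funext (survival_eq_one_sub_cdf hX), sub_self] using
    (tendsto_cdf_atTop (μ.map X)).const_sub 1

lemma continuousWithinAt_survival_Ici (hX : AEMeasurable X μ) (x : ℝ) :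
    ContinuousWithinAt (survival μ X) (Ici x) x := by
  rw [funext (survival_eq_one_sub_cdf hX)]
  exact continuousWithinAt_const.sub ((cdf (μ.map X)).right_continuous x)

lemma continuous_survival [NullSingletonClass (μ.map X)] (hX : AEMeasurable X μ) :
    Continuous (survival μ X) := by
  have := Measure.isProbabilityMeasure_map hX
  rw [funext (survival_eq_one_sub_cdf hX)]
  exact continuous_const.sub (continuous_cdf (μ.map X))

lemma survival_zero_eq_one [NullSingletonClass (μ.map X)] (hX : AEMeasurable X μ)
    (h0 : 0 ≤ᵐ[μ] X) : survival μ X 0 = 1 := by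
  have hne : ∀ᵐ ω ∂μ, X ω ≠ 0 := by
    refine ae_of_ae_map hX (p := (· ≠ 0)) ?_
    simp only [ae_iff, not_not, Set.ofPred_eq_eq_singleton, measure_singleton]
  refine survival_eq_one_of_ae_lt ?_
  filter_upwards [h0, hne] with ω hω hω' using lt_of_le_of_ne hω hω'.symm

lemma map_Ioc_eq_survival_sub (hX : AEMeasurable X μ) (x y : ℝ) :
    μ.map X (Ioc x y) = ENNReal.ofReal (survival μ X x - survival μ X y) := by
  have := Measure.isProbabilityMeasure_map hX
  nth_rw 1 [← measure_cdf (μ.map X)]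
  rw [StieltjesFunction.measure_Ioc, survival_eq_one_sub_cdf hX, survival_eq_one_sub_cdf hX,
    sub_sub_sub_cancel_left]

end Survival

section HazardRate

variable {Ω : Type*} [MeasurableSpace Ω] {μ : Measure Ω} {X : Ω → ℝ} {f : ℝ → ℝ}

lemma survival_mul_density_le {a u : ℝ} (hf : 0 ≤ f u)
    (hrate : f u / survival μ X u ≤ f (a + u) / survival μ X (a + u))
    (hlt : survival μ X a * survival μ X u < survival μ X (a + u)) (hu : 0 < survival μ X u) :
    survival μ X a * f u ≤ f (a + u) := by
  have hau : 0 < survival μ X (a + u) := (mul_nonneg (survival_nonneg a) hu.le).trans_lt hlt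
  calc survival μ X a * f u
      = survival μ X a * survival μ X u * (f u / survival μ X u) := by field_simp
    _ ≤ survival μ X (a + u) * (f (a + u) / survival μ X (a + u)) :=
        mul_le_mul hlt.le hrate (div_nonneg hf hu.le) hau.le
    _ = f (a + u) := mul_div_cancel₀ _ hau.ne'

variable [IsProbabilityMeasure μ]

lemma setLIntegral_Ioc_density (hX : AEMeasurable X μ)
    (hmap : μ.map X = volume.withDensity fun x ↦ ENNReal.ofReal (f x)) (x y : ℝ) :
    ∫⁻ u in Ioc x y, ENNReal.ofReal (f u) =
      ENNReal.ofReal (survival μ X x - survival μ X y) := by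
  rw [← withDensity_apply _ measurableSet_Ioc, ← hmap, map_Ioc_eq_survival_sub hX]

lemma setLIntegral_Ioc_density_add_left (hX : AEMeasurable X μ)
    (hmap : μ.map X = volume.withDensity fun x ↦ ENNReal.ofReal (f x)) (a x y : ℝ) :
    ∫⁻ u in Ioc x y, ENNReal.ofReal (f (a + u)) =
      ENNReal.ofReal (survival μ X (a + x) - survival μ X (a + y)) := by
  rw [← setLIntegral_Ioc_density hX hmap,
    (measurePreserving_add_left volume a).setLIntegral_comp_emb (measurableEmbedding_addLeft a)
      (fun u ↦ ENNReal.ofReal (f u)), image_const_add_Ioc]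

lemma survival_mul_sub_le_of_density_le (hX : AEMeasurable X μ)
    (hmap : μ.map X = volume.withDensity fun x ↦ ENNReal.ofReal (f x)) {a s t : ℝ} (hst : s ≤ t)
    (hle : ∀ u ∈ Ioc s t, survival μ X a * f u ≤ f (a + u)) :
    survival μ X a * (survival μ X s - survival μ X t) ≤
      survival μ X (a + s) - survival μ X (a + t) := by
  have hint : ∫⁻ u in Ioc s t, ENNReal.ofReal (survival μ X a) * ENNReal.ofReal (f u) ≤
      ∫⁻ u in Ioc s t, ENNReal.ofReal (f (a + u)) := by
    refine setLIntegral_mono' measurableSet_Ioc fun u hu ↦ ?_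
    rw [← ENNReal.ofReal_mul (survival_nonneg a)]
    exact ENNReal.ofReal_le_ofReal (hle u hu)
  rwa [lintegral_const_mul' _ _ ENNReal.ofReal_ne_top, setLIntegral_Ioc_density hX hmap,
    setLIntegral_Ioc_density_add_left hX hmap, ← ENNReal.ofReal_mul (survival_nonneg a),
    ENNReal.ofReal_le_ofReal_iff
      (sub_nonneg.2 (antitone_survival (add_le_add_right hst a)))] at hint

theorem IsMHR.isNewBetterThanUsed (hMHR : IsMHR μ X) (hX : AEMeasurable X μ) (h0 : 0 ≤ᵐ[μ] X) :
    IsNewBetterThanUsed μ X := by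
  intro a t ha ht
  obtain ⟨f, hf, hmap, hrate⟩ := hMHR
  have : NullSingletonClass (μ.map X) :=
    ⟨fun x ↦ hmap ▸ withDensity_absolutelyContinuous _ _ (measure_singleton x)⟩
  have hcont := continuous_survival hX
  have hcdf (x : ℝ) : (μ {ω | X ω ≤ x}).toReal = 1 - survival μ X x := by
    rw [survival_eq_one_sub_measureReal_le hX, sub_sub_cancel, measureReal_def]
  simp only [hcdf, sub_sub_cancel, sub_lt_self_iff] at hrate
  suffices 0 ≤ survival μ X a * survival μ X t - survival μ X (a + t) from sub_nonneg.1 this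
  refine nonneg_of_le_of_forall_Ioc_neg
    (φ := fun s ↦ survival μ X a * survival μ X s - survival μ X (a + s)) ht
    (by fun_prop) (by simp [survival_zero_eq_one hX h0]) fun s hs hneg ↦ ?_
  have hdensity : ∀ u ∈ Ioc s t, survival μ X a * f u ≤ f (a + u) := by
    intro u hu
    have hlt := sub_neg.1 (hneg u hu)
    have hau : 0 < survival μ X (a + u) :=
      (mul_nonneg (survival_nonneg a) (survival_nonneg u)).trans_lt hlt
    have hle : u ≤ a + u := le_add_of_nonneg_left ha
    have hu : 0 < survival μ X u := hau.trans_le (antitone_survival hle)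
    exact survival_mul_density_le (hf u) (hrate u (a + u) hle hu hau) hlt hu
  linarith [survival_mul_sub_le_of_density_le hX hmap hs.2 hdensity]

end HazardRate

section Quantile

variable {Ω : Type*} [MeasurableSpace Ω] {μ : Measure Ω} [IsProbabilityMeasure μ] {X : Ω → ℝ}
  {p : ℝ}

lemma alphaQ_eq_sSup_survival : alphaQ μ X p = sSup {τ | 1 / p ≤ survival μ X τ} := by
  simp only [alphaQ, ← ofReal_survival, ENNReal.ofReal_le_ofReal_iff (survival_nonneg _)]

lemma bddAbove_setOf_le_survival (hX : AEMeasurable X μ) {c : ℝ} (hc : 0 < c) :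
    BddAbove {τ | c ≤ survival μ X τ} := by
  obtain ⟨M, hM⟩ := ((tendsto_survival_atTop hX).eventually_lt_const hc).exists
  exact ⟨M, fun τ hτ ↦ (antitone_survival.reflect_lt (hM.trans_le hτ)).le⟩

lemma survival_alphaQ_le (hX : AEMeasurable X μ) (hp : 0 < p) :
    survival μ X (alphaQ μ X p) ≤ 1 / p := by
  refine le_of_tendsto ((continuousWithinAt_survival_Ici hX _).mono Ioi_subset_Ici_self)
    (eventually_mem_nhdsWithin.mono fun τ hτ ↦ le_of_not_ge fun hle ↦ ?_)
  rw [alphaQ_eq_sSup_survival] at hτ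
  exact (le_csSup (bddAbove_setOf_le_survival hX (one_div_pos.2 hp)) hle).not_gt hτ

lemma alphaQ_nonneg (hX : AEMeasurable X μ) (h0 : 0 ≤ᵐ[μ] X) (hp : 1 ≤ p) :
    0 ≤ alphaQ μ X p := by
  rw [alphaQ_eq_sSup_survival]
  refine le_of_forall_lt_imp_le_of_dense fun τ hτ ↦
    le_csSup (bddAbove_setOf_le_survival hX (by positivity)) ?_
  rw [mem_ofPred_eq, survival_eq_one_of_ae_lt (h0.mono fun ω hω ↦ hτ.trans_le hω)]
  exact div_le_one_of_le₀ hp (by positivity)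

end Quantile

namespace IsNewBetterThanUsed

variable {Ω : Type*} [MeasurableSpace Ω] {μ : Measure Ω} [IsProbabilityMeasure μ] {X : Ω → ℝ}
  {a b p L : ℝ}

lemma survival_nat_mul_le (hX : IsNewBetterThanUsed μ X) (hb : 0 ≤ b) (n : ℕ) :
    survival μ X (n * b) ≤ survival μ X b ^ n := by
  induction n with
  | zero => simpa using survival_le_one 0
  | succ n ih =>
    calc survival μ X ((n + 1 : ℕ) * b) = survival μ X (n * b + b) := by
          rw [Nat.cast_succ, add_one_mul]
      _ ≤ survival μ X (n * b) * survival μ X b := hX _ _ (by positivity) hb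
      _ ≤ survival μ X b ^ n * survival μ X b :=
          mul_le_mul_of_nonneg_right ih (survival_nonneg b)
      _ = survival μ X b ^ (n + 1) := (pow_succ _ _).symm

lemma measureReal_mul_le_le_rpow (hX : IsNewBetterThanUsed μ X) (hp : 1 ≤ p) (hb : 0 < b)
    (hbp : survival μ X b ≤ 1 / p) (L : ℝ) : μ.real {ω | L * b ≤ X ω} ≤ p ^ (1 - L) := by
  rcases le_or_gt L 0 with hL | hL
  · exact measureReal_le_one.trans (Real.one_le_rpow hp (by linarith))
  -- The largest integer `n < L` is used since `X` may have an atom at `L * b`.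
  obtain ⟨n, hn⟩ := Nat.exists_eq_succ_of_ne_zero (Nat.ceil_pos.2 hL).ne'
  have hnL : (n : ℝ) < L := Nat.lt_ceil.1 (hn ▸ n.lt_succ_self)
  have hLn : L ≤ n + 1 := by exact_mod_cast hn ▸ Nat.le_ceil L
  calc μ.real {ω | L * b ≤ X ω} ≤ survival μ X (n * b) :=
        measureReal_mono fun ω hω ↦ (mul_lt_mul_of_pos_right hnL hb).trans_le hω
    _ ≤ survival μ X b ^ n := hX.survival_nat_mul_le hb.le n
    _ ≤ (1 / p) ^ n := pow_le_pow_left₀ (survival_nonneg b) hbp n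
    _ = p ^ (-n : ℝ) := by
        rw [Real.rpow_neg (by positivity), Real.rpow_natCast, one_div, inv_pow]
    _ ≤ p ^ (1 - L) := Real.rpow_le_rpow_of_exponent_le hp (by linarith)

variable (hX : IsNewBetterThanUsed μ X) (h0 : 0 ≤ᵐ[μ] X) (hint : Integrable X μ)
include hX h0 hint

lemma integral_max_sub_zero_le (ha : 0 ≤ a) :
    ∫ ω, max (X ω - a) 0 ∂μ ≤ survival μ X a * ∫ ω, X ω ∂μ := by
  have hm : AEMeasurable (fun ω ↦ max (X ω - a) 0) μ :=
    (hint.aemeasurable.sub_const a).max aemeasurable_const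
  have hm0 : 0 ≤ᵐ[μ] fun ω ↦ max (X ω - a) 0 := .of_forall fun _ ↦ le_max_right _ _
  rw [integral_eq_lintegral_of_nonneg_ae hm0 hm.aestronglyMeasurable]
  refine ENNReal.toReal_le_of_le_ofReal
    (mul_nonneg (survival_nonneg a) (integral_nonneg_of_ae h0)) ?_
  rw [lintegral_eq_lintegral_meas_lt μ hm0 hm, ENNReal.ofReal_mul (survival_nonneg a),
    ofReal_integral_eq_lintegral_ofReal hint h0,
    lintegral_eq_lintegral_meas_lt μ h0 hint.aemeasurable,
    ← lintegral_const_mul' _ _ ENNReal.ofReal_ne_top]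
  refine setLIntegral_mono' measurableSet_Ioi fun t ht ↦ ?_
  have hexcess : {ω | t < max (X ω - a) 0} = {ω | a + t < X ω} := by
    ext ω
    simp only [mem_ofPred_eq, lt_max_iff, lt_sub_iff_add_lt', (mem_Ioi.1 ht).not_gt, or_false]
  rw [hexcess, ← ofReal_survival, ← ofReal_survival, ← ENNReal.ofReal_mul (survival_nonneg a)]
  exact ENNReal.ofReal_le_ofReal (hX a t ha (mem_Ioi.1 ht).le)

lemma integral_le_of_survival_le (hp : 1 < p) (hb : 0 ≤ b) (hbp : survival μ X b ≤ 1 / p) :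
    ∫ ω, X ω ∂μ ≤ p / (p - 1) * b := by
  have hmax : Integrable (fun ω ↦ max (X ω - b) 0) μ := (hint.sub (integrable_const b)).pos_part
  have hmean : ∫ ω, X ω ∂μ ≤ b + 1 / p * ∫ ω, X ω ∂μ := calc
    ∫ ω, X ω ∂μ ≤ ∫ ω, (b + max (X ω - b) 0) ∂μ :=
        integral_mono hint ((integrable_const b).add hmax) fun ω ↦
          sub_le_iff_le_add'.1 (le_max_left (X ω - b) 0)
    _ = b + ∫ ω, max (X ω - b) 0 ∂μ := by
        rw [integral_add (integrable_const b) hmax, integral_const, probReal_univ, one_smul]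
    _ ≤ b + survival μ X b * ∫ ω, X ω ∂μ := by
        grw [hX.integral_max_sub_zero_le h0 hint hb]
    _ ≤ b + 1 / p * ∫ ω, X ω ∂μ := by
        grw [hbp]
        exact integral_nonneg_of_ae h0
  have hp1 : 0 < p - 1 := sub_pos.2 hp
  have hp0 : 0 < p := one_pos.trans hp
  rw [div_mul_eq_mul_div, le_div_iff₀ hp1]
  field_simp at hmean
  linarith

lemma tailCon_le (ha : 0 ≤ a) :
    tailCon μ X a ≤ μ.real {ω | a ≤ X ω} * (a + ∫ ω, X ω ∂μ) := by
  have hmax : Integrable (fun ω ↦ max (X ω - a) 0) μ := (hint.sub (integrable_const a)).pos_part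
  calc tailCon μ X a ≤ ∫ ω in {ω | a ≤ X ω}, (a + max (X ω - a) 0) ∂μ :=
        setIntegral_mono hint.integrableOn ((integrable_const a).add hmax).integrableOn fun ω ↦
          sub_le_iff_le_add'.1 (le_max_left (X ω - a) 0)
    _ = μ.real {ω | a ≤ X ω} * a + ∫ ω in {ω | a ≤ X ω}, max (X ω - a) 0 ∂μ := by
        rw [integral_add (integrable_const a) hmax.integrableOn, setIntegral_const, smul_eq_mul]
    _ ≤ μ.real {ω | a ≤ X ω} * a + ∫ ω, max (X ω - a) 0 ∂μ := by
        grw [setIntegral_le_integral hmax (.of_forall fun _ ↦ le_max_right _ _)]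
    _ ≤ μ.real {ω | a ≤ X ω} * a + survival μ X a * ∫ ω, X ω ∂μ := by
        grw [hX.integral_max_sub_zero_le h0 hint ha]
    _ ≤ μ.real {ω | a ≤ X ω} * a + μ.real {ω | a ≤ X ω} * ∫ ω, X ω ∂μ := by
        have hle : survival μ X a ≤ μ.real {ω | a ≤ X ω} :=
          measureReal_mono fun ω (hω : a < X ω) ↦ hω.le
        grw [hle]
        exact integral_nonneg_of_ae h0
    _ = μ.real {ω | a ≤ X ω} * (a + ∫ ω, X ω ∂μ) := (mul_add _ _ _).symm

theorem tailCon_mul_le (hp : 1 < p) (hb : 0 ≤ b) (hbp : survival μ X b ≤ 1 / p) (hL : 0 ≤ L) :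
    tailCon μ X (L * b) ≤ p ^ (1 - L) * (L + p / (p - 1)) * b := by
  have htail : tailCon μ X (L * b) ≤ μ.real {ω | L * b ≤ X ω} * ((L + p / (p - 1)) * b) := by
    grw [hX.tailCon_le h0 hint (mul_nonneg hL hb),
      hX.integral_le_of_survival_le h0 hint hp hb hbp, ← add_mul]
  rcases hb.eq_or_lt with rfl | hb
  · simpa only [mul_zero] using htail
  · have hp1 : 0 < p - 1 := sub_pos.2 hp
    grw [htail, hX.measureReal_mul_le_le_rpow hp.le hb hbp L, mul_assoc]

end IsNewBetterThanUsed

theorem bounding_last_variable_general {Ω : Type*} [MeasurableSpace Ω] {μ : Measure Ω}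
    [IsProbabilityMeasure μ] {X : Ω → ℝ} (hX : IsNewBetterThanUsed μ X) (h0 : 0 ≤ᵐ[μ] X)
    (hint : Integrable X μ) {ε : ℝ} (hε : 0 < ε) (hε' : ε ≤ 1 / 16) :
    tailCon μ X (Real.logb 2 (1 / ε) * alphaQ μ X √2) ≤
      6 * √ε * Real.logb 2 (1 / ε) * alphaQ μ X √2 := by
  have hL := four_le_logb_two_one_div hε hε'
  set L := Real.logb 2 (1 / ε)
  have hsqrt : 1 < √2 := Real.one_lt_sqrt_two
  have hsq : √2 * √2 = 2 := Real.mul_self_sqrt zero_le_two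
  have hβ : 0 ≤ alphaQ μ X √2 := alphaQ_nonneg hint.aemeasurable h0 hsqrt.le
  have hsurv := survival_alphaQ_le hint.aemeasurable (one_pos.trans hsqrt)
  have hconst : √2 / (√2 - 1) ≤ 4 := by
    rw [div_le_iff₀ (sub_pos.2 hsqrt)]
    nlinarith
  calc tailCon μ X (L * alphaQ μ X √2)
      ≤ √2 ^ (1 - L) * (L + √2 / (√2 - 1)) * alphaQ μ X √2 :=
        hX.tailCon_mul_le h0 hint hsqrt hβ hsurv (by linarith)
    _ = √2 * √ε * (L + √2 / (√2 - 1)) * alphaQ μ X √2 := by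
        rw [sqrt_two_rpow_one_sub_logb_inv hε]
    _ ≤ √2 * √ε * (L + L) * alphaQ μ X √2 := by grw [hconst, hL]
    _ = 2 * √2 * √ε * L * alphaQ μ X √2 := by ring
    _ ≤ 6 * √ε * L * alphaQ μ X √2 := by
        have h3 : 2 * √2 ≤ 6 := by nlinarith
        grw [h3]

/-- For nonnegative continuous MHR random variables `X_1, …, X_k` with
`k = 2^K ≥ 2` and finite expectations, if `β₂` is the second output of Algorithm 1 and `i*`
the surviving index, then for every `ε ∈ (0, 1/16)`:
`Con[X_{i*} ≥ log₂(1/ε)·β₂] ≤ 6·√ε·log₂(1/ε)·β₂`. -/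
theorem bounding_last_variable
    {Ω : Type*} [MeasurableSpace Ω] (μ : Measure Ω) [IsProbabilityMeasure μ]
    (K : ℕ) (hK : 1 ≤ K)
    (X : Fin (2 ^ K) → Ω → ℝ)
    (hmeas : ∀ i, Measurable (X i))
    (hnonneg : ∀ i ω, 0 ≤ X i ω)
    (hint : ∀ i, Integrable (X i) μ)
    (hMHR : ∀ i, IsMHR μ (X i))
    (Q : ℕ → Finset (Fin (2 ^ K))) (βt : ℕ → ℝ) (istar : Fin (2 ^ K)) (β₁ β₂ : ℝ)
    (hrun : AlgoRun μ K X Q βt istar β₁ β₂) :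
    ∀ ε : ℝ, 0 < ε → ε < 1 / 16 →
      tailCon μ (X istar) (Real.logb 2 (1 / ε) * β₂) ≤
        6 * Real.sqrt ε * Real.logb 2 (1 / ε) * β₂ := by
  intro ε hε hε'
  obtain ⟨-, -, -, -, rfl⟩ := hrun
  have h0 : 0 ≤ᵐ[μ] X istar := .of_forall (hnonneg istar)
  exact bounding_last_variable_general
    ((hMHR istar).isNewBetterThanUsed (hmeas istar).aemeasurable h0) h0 (hint istar) hε hε'.le
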